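/- Let N ≥ 1, θ ∈ (0,2], p > p_θ := 1 + θ/N, q ∈ ℝ, ε > 0, K > 0, R ∈ (0,1), and α > 1 with αθ/(p-1) < N. Suppose μ : ℝᴺ → [0,∞) satisfies 0 ≤ μ(x) ≤ ε |x|^{-θ/(p-1)} |log|x||^{-q/(p-1)} χ_{B(0,R)}(x) + K for a.e. x ∈ ℝᴺ. Then there exists C > 0 such that sup_{x ∈ ℝᴺ} ( (1/|B(x,σ)|) ∫_{B(x,σ)} μ(y)^α dy )^{1/α} ≤ C ε σ^{-θ/(p-1)} |log σ|^{-q/(p-1)} for all sufficiently small σ > 0. -/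

import Mathlib

open MeasureTheory

lemma aux_potter (b δ m : ℝ) (hδ : 0 < δ) (hm : 0 < m) :
    ∃ C : ℝ, 0 < C ∧ ∀ u v : ℝ, m ≤ u → m ≤ v →
      u ^ (-b) ≤ C * Real.exp (δ * |u - v|) * v ^ (-b) := by
  set k := δ / (|b| + 1) with hk
  have hb : 0 ≤ |b| := abs_nonneg b
  have hkpos : 0 < k := by positivity
  have hkb : k * |b| ≤ δ := by
    rw [hk, div_mul_eq_mul_div, div_le_iff₀ (by positivity)]
    nlinarith
  set D := 1 + 1 / (m * k) with hD
  have hDpos : 0 < D := by positivity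
  refine ⟨D ^ |b|, by positivity, ?_⟩
  have key : ∀ u v : ℝ, m ≤ u → m ≤ v → u / v ≤ D * Real.exp (k * |u - v|) := by
    intro u v hu hv
    have hv0 : 0 < v := lt_of_lt_of_le hm hv
    have h1 : u / v ≤ 1 + |u - v| / m := by
      have : u / v = 1 + (u - v) / v := by field_simp; ring
      rw [this]
      have h2 : (u - v) / v ≤ |u - v| / v := by gcongr; exact le_abs_self _
      have h3 : |u - v| / v ≤ |u - v| / m := by gcongr
      linarith
    have h4 : 1 + |u - v| / m ≤ D * (k * |u - v| + 1) := by
      have : D * (k * |u - v| + 1) = 1 + |u - v| / m + (k * |u - v| + 1 / (m * k)) := by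
        rw [hD]; field_simp; ring
      rw [this]
      have : 0 ≤ k * |u - v| + 1 / (m * k) := by positivity
      linarith
    refine h1.trans (h4.trans ?_)
    gcongr
    exact Real.add_one_le_exp _
  have key2 : ∀ u v : ℝ, m ≤ u → m ≤ v → (u / v) ^ |b| ≤ D ^ |b| * Real.exp (δ * |u - v|) := by
    intro u v hu hv
    have hv0 : 0 < v := lt_of_lt_of_le hm hv
    have hu0 : 0 < u := lt_of_lt_of_le hm hu
    calc (u / v) ^ |b| ≤ (D * Real.exp (k * |u - v|)) ^ |b| := by
          apply Real.rpow_le_rpow (by positivity) (key u v hu hv) hb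
      _ = D ^ |b| * Real.exp (k * |b| * |u - v|) := by
          rw [Real.mul_rpow hDpos.le (Real.exp_pos _).le, ← Real.exp_mul]
          ring_nf
      _ ≤ _ := by gcongr
  intro u v hu hv
  have hv0 : 0 < v := lt_of_lt_of_le hm hv
  have hu0 : 0 < u := lt_of_lt_of_le hm hu
  have h5 : (u / v) ^ (-b) ≤ D ^ |b| * Real.exp (δ * |u - v|) := by
    rcases le_total 0 b with h | h
    · have := key2 v u hv hu
      rw [abs_sub_comm] at this
      rw [Real.rpow_neg (by positivity), ← Real.inv_rpow (by positivity), inv_div]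
      nth_rewrite 1 [abs_of_nonneg h] at this
      exact this
    · have := key2 u v hu hv
      nth_rewrite 1 [abs_of_nonpos h] at this
      exact this
  rw [Real.div_rpow hu0.le hv0.le, div_le_iff₀ (by positivity)] at h5
  exact h5

lemma aux_avg (N : ℕ) (hN : 1 ≤ N) (t : ℝ) (ht : t < N) :
    ∃ A : ℝ, 0 < A ∧ ∀ σ : ℝ, 0 < σ → ∀ (x : EuclideanSpace ℝ (Fin N))
      (f : EuclideanSpace ℝ (Fin N) → ℝ) (M : ℝ), 0 ≤ M → (∀ᵐ y, 0 ≤ f y) →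
      (∀ᵐ y, f y ≤ M * (2 + (Metric.ball (0 : EuclideanSpace ℝ (Fin N)) 1).indicator
        (fun z => ‖z‖ ^ (-t)) (σ⁻¹ • y))) →
      ⨍ y in Metric.ball x σ, f y ≤ M * A := by
  set h : EuclideanSpace ℝ (Fin N) → ℝ := 
    (Metric.ball (0 : EuclideanSpace ℝ (Fin N)) 1).indicator (fun z => ‖z‖ ^ (-t)) with hh
  have hfr : Module.finrank ℝ (EuclideanSpace ℝ (Fin N)) = N := by simp
  have hint : Integrable h := by
    rw [hh, integrable_indicator_iff measurableSet_ball]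
    refine integrableOn_ball_of_norm_le_rpow (C := 1) (α := t) (by rw [hfr]; exact hN)
      (by rw [hfr]; exact ht) ?_ ?_
    · refine Filter.Eventually.of_forall fun x => ?_
      rw [one_mul, Real.norm_of_nonneg (by positivity)]
    · exact (measurable_norm.pow_const _).aestronglyMeasurable
  have hnn : ∀ z, 0 ≤ h z := fun z => Set.indicator_nonneg (fun _ _ => by positivity) _
  set V := (volume : Measure (EuclideanSpace ℝ (Fin N))).real (Metric.ball 0 1) with hV
  have hVpos : 0 < V := by
    rw [hV, measureReal_def]
    exact ENNReal.toReal_pos (Metric.measure_ball_pos _ _ one_pos).ne' measure_ball_lt_top.ne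
  have hI : 0 ≤ ∫ z, h z := integral_nonneg hnn
  refine ⟨2 + (∫ z, h z) / V, by positivity, ?_⟩
  intro σ hσ x f M hM hf0 hf
  have hvol : (volume : Measure (EuclideanSpace ℝ (Fin N))).real (Metric.ball x σ) = σ ^ N * V := by
    rw [measureReal_def, Measure.addHaar_ball_of_pos _ _ hσ, hfr, ENNReal.toReal_mul,
      ENNReal.toReal_ofReal (by positivity), hV, measureReal_def]
  have hints : Integrable (fun y => h (σ⁻¹ • y)) := hint.comp_smul (inv_ne_zero hσ.ne')
  have hc : IntegrableOn (fun _ => (2:ℝ)) (Metric.ball x σ) 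
      (volume : Measure (EuclideanSpace ℝ (Fin N))) :=
    integrableOn_const measure_ball_lt_top.ne
  rw [setAverage_eq, hvol, smul_eq_mul, inv_mul_le_iff₀ (by positivity)]
  calc ∫ y in Metric.ball x σ, f y ≤ ∫ y in Metric.ball x σ, M * (2 + h (σ⁻¹ • y)) := by
        refine integral_mono_of_nonneg (ae_restrict_of_ae hf0) ?_ (ae_restrict_of_ae hf)
        exact (hc.add hints.integrableOn).const_mul M
    _ = M * (2 * (σ ^ N * V) + ∫ y in Metric.ball x σ, h (σ⁻¹ • y)) := by
        rw [integral_const_mul, integral_add hc hints.integrableOn, setIntegral_const, hvol,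
          smul_eq_mul, mul_comm 2]
    _ ≤ M * (2 * (σ ^ N * V) + ∫ y, h (σ⁻¹ • y)) := by
        have := setIntegral_le_integral (s := Metric.ball x σ) hints
          (Filter.Eventually.of_forall fun y => hnn _)
        gcongr
    _ = M * (2 * (σ ^ N * V) + σ ^ N * ∫ z, h z) := by
        rw [Measure.integral_comp_inv_smul_of_nonneg _ _ hσ.le, hfr, smul_eq_mul]
    _ = σ ^ N * V * (M * (2 + (∫ z, h z) / V)) := by
        field_simp

set_option maxHeartbeats 2000000 in
theorem stmt_18 (N : ℕ) (hN : 1 ≤ N) (θ : ℝ) (hθ0 : 0 < θ) (hθ2 : θ ≤ 2)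
    (p q ε K R α : ℝ) (hp : 1 + θ / N < p) (hε : 0 < ε) (hK : 0 < K)
    (hR0 : 0 < R) (hR1 : R < 1) (hα : 1 < α) (hαθ : α * θ / (p - 1) < N)
    (μ : EuclideanSpace ℝ (Fin N) → ℝ) (hμ : Measurable μ)
    (hbound : ∀ᵐ x : EuclideanSpace ℝ (Fin N),
      0 ≤ μ x ∧ μ x ≤ ε * ‖x‖ ^ (-θ/(p-1)) * |Real.log ‖x‖| ^ (-q/(p-1)) *
        (Metric.ball (0 : EuclideanSpace ℝ (Fin N)) R).indicator (fun _ => (1:ℝ)) x + K) :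
    ∃ C : ℝ, 0 < C ∧ ∃ σ₀ : ℝ, 0 < σ₀ ∧ ∀ σ : ℝ, 0 < σ → σ < σ₀ →
      ∀ x : EuclideanSpace ℝ (Fin N),
        (⨍ y in Metric.ball x σ, μ y ^ α) ^ (1/α) ≤
          C * ε * σ ^ (-θ/(p-1)) * |Real.log σ| ^ (-q/(p-1)) := by
  have hα0 : 0 < α := by linarith
  have hp1 : 0 < p - 1 := by
    have : 0 ≤ θ / N := by positivity
    linarith
  have hfr : Module.finrank ℝ (EuclideanSpace ℝ (Fin N)) = N := by simp
  have : Nontrivial (EuclideanSpace ℝ (Fin N)) :=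
    Module.nontrivial_of_finrank_pos (R := ℝ) (by rw [hfr]; exact hN)
  rw [neg_div, neg_div] at *
  rw [mul_div_assoc] at hαθ
  set a := θ / (p - 1) with ha
  set b := q / (p - 1) with hb
  have ha0 : 0 < a := by positivity
  clear_value a b
  -- choice of the exponent
  obtain ⟨δ, hδ0, hδa, hδN⟩ : ∃ δ : ℝ, 0 < δ ∧ δ ≤ a ∧ α * (a + δ) < N := by
    refine ⟨min a ((N - α * a) / (2 * α)), ?_, min_le_left _ _, ?_⟩
    · have : 0 < (N : ℝ) - α * a := by linarith
      positivity
    · have h1 : α * min a ((N - α * a) / (2 * α)) ≤ α * ((N - α * a) / (2 * α)) := by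
        gcongr; exact min_le_right _ _
      have h2 : α * ((N - α * a) / (2 * α)) = (N - α * a) / 2 := by field_simp
      rw [mul_add]; linarith
  have hL : 0 < -Real.log R := by linarith [Real.log_neg hR0 hR1]
  set m := min (-Real.log R) 1 with hm
  have hm0 : 0 < m := lt_min hL one_pos
  obtain ⟨P, hP0, hP⟩ := aux_potter b δ m hδ0 hm0
  obtain ⟨A, hA0, hA⟩ := aux_avg N hN (α * (a + δ)) hδN
  set D := ε * P + K * P with hD
  have hD0 : 0 < D := by positivity
  refine ⟨2 * D * A ^ (1/α) / ε, by positivity, Real.exp (-1), Real.exp_pos _, ?_⟩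
  intro σ hσ hσ0 x
  set v := -Real.log σ with hv
  have hv1 : 1 ≤ v := by
    have := Real.log_lt_log hσ hσ0
    rw [Real.log_exp] at this
    linarith
  have hσa : σ ^ (-a) = Real.exp (a * v) := by
    rw [Real.rpow_def_of_pos hσ, hv]; ring_nf
  have hlogσ : |Real.log σ| = v := by
    rw [abs_of_neg (by linarith)]
  have hmv : m ≤ v := (min_le_right _ _).trans hv1
  set Φ := Real.exp (a * v) * v ^ (-b) with hΦ
  have hΦ0 : 0 < Φ := by positivity
  have hKΦ : K ≤ K * P * Φ := by
    have h1 := hP 1 v (min_le_right _ _) hmv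
    rw [Real.one_rpow] at h1
    have h2 : Real.exp (δ * |1 - v|) ≤ Real.exp (a * v) := by
      rw [abs_of_nonpos (by linarith)]
      apply Real.exp_le_exp.2
      nlinarith
    have h3 : 1 ≤ P * Φ := by
      rw [hΦ, ← mul_assoc]
      refine h1.trans ?_
      gcongr
    nlinarith
  have hpt : ∀ y : EuclideanSpace ℝ (Fin N), y ≠ 0 → 0 ≤ μ y → 
      μ y ≤ ε * ‖y‖ ^ (-a) * |Real.log ‖y‖| ^ (-b) *
        (Metric.ball (0 : EuclideanSpace ℝ (Fin N)) R).indicator (fun _ => (1:ℝ)) y + K →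
      μ y ^ α ≤ (2 * D * Φ) ^ α * (2 + (Metric.ball (0 : EuclideanSpace ℝ (Fin N)) 1).indicator
        (fun z => ‖z‖ ^ (-(α * (a + δ)))) (σ⁻¹ • y)) := by
    intro y hy h0 h1
    have hr : 0 < ‖y‖ := norm_pos_iff.2 hy
    set z := σ / ‖y‖ with hz
    have hz0 : 0 < z := by positivity
    have h2 : μ y ≤ D * Φ * (1 + z ^ (a + δ)) := by
      have hzz : 0 ≤ z ^ (a + δ) := by positivity
      have hk2 : K ≤ K * P * Φ * (1 + z ^ (a + δ)) := by
        refine hKΦ.trans (le_mul_of_one_le_right (by positivity) (by linarith))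
      have hk3 : ε * ‖y‖ ^ (-a) * |Real.log ‖y‖| ^ (-b) *
        (Metric.ball (0 : EuclideanSpace ℝ (Fin N)) R).indicator (fun _ => (1:ℝ)) y ≤ 
          ε * P * Φ * (1 + z ^ (a + δ)) := by
        by_cases hyR : y ∈ Metric.ball (0 : EuclideanSpace ℝ (Fin N)) R
        · rw [Set.indicator_of_mem hyR, mul_one]
          have hyR' : ‖y‖ < R := by simpa using hyR
          set u := -Real.log ‖y‖ with hu
          have huR : -Real.log R ≤ u := by
            have := Real.log_lt_log hr hyR'
            linarith
          have hlogy : |Real.log ‖y‖| = u := by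
            rw [abs_of_neg (by linarith)]
          have hya : ‖y‖ ^ (-a) = Real.exp (a * u) := by
            rw [Real.rpow_def_of_pos hr, hu]; ring_nf
          have hza : z ^ (a + δ) = Real.exp ((a + δ) * (u - v)) := by
            rw [Real.rpow_def_of_pos hz0, hz, Real.log_div hσ.ne' hr.ne', hu, hv]; ring_nf
          have h4 := hP u v ((min_le_left _ _).trans huR) hmv
          have h5 : Real.exp (a * u) * Real.exp (δ * |u - v|) ≤
              Real.exp (a * v) * (1 + z ^ (a + δ)) := by
            rw [hza, mul_add, ← Real.exp_add, ← Real.exp_add, mul_one]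
            rcases le_total v u with h | h
            · rw [abs_of_nonneg (by linarith)]
              have e : a * u + δ * (u - v) = a * v + (a + δ) * (u - v) := by ring
              rw [e]
              linarith [Real.exp_pos (a * v)]
            · rw [abs_of_nonpos (by linarith)]
              have : Real.exp (a * u + δ * -(u - v)) ≤ Real.exp (a * v) := by
                apply Real.exp_le_exp.2
                nlinarith
              linarith [Real.exp_pos (a * v + (a + δ) * (u - v))]
          rw [hlogy, hya]
          calc ε * Real.exp (a * u) * u ^ (-b) 
              ≤ ε * Real.exp (a * u) * (P * Real.exp (δ * |u - v|) * v ^ (-b)) := by gcongr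
            _ = ε * P * (Real.exp (a * u) * Real.exp (δ * |u - v|)) * v ^ (-b) := by ring
            _ ≤ ε * P * (Real.exp (a * v) * (1 + z ^ (a + δ))) * v ^ (-b) := by gcongr
            _ = _ := by rw [hΦ]; ring
        · rw [Set.indicator_of_notMem hyR, mul_zero]
          positivity
      calc μ y ≤ _ := h1
        _ ≤ ε * P * Φ * (1 + z ^ (a + δ)) + K * P * Φ * (1 + z ^ (a + δ)) := add_le_add hk3 hk2
        _ = _ := by rw [hD]; ring
    by_cases hyσ : ‖y‖ < σ
    · have hmem : σ⁻¹ • y ∈ Metric.ball (0 : EuclideanSpace ℝ (Fin N)) 1 := by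
        rw [mem_ball_zero_iff, norm_smul, Real.norm_of_nonneg (by positivity), 
          inv_mul_lt_iff₀ hσ, mul_one]
        exact hyσ
      rw [Set.indicator_of_mem hmem]
      have hnz : ‖σ⁻¹ • y‖ = z⁻¹ := by
        rw [norm_smul, Real.norm_of_nonneg (by positivity), hz, inv_div, inv_mul_eq_div]
      have hz1 : 1 ≤ z := by rw [hz, one_le_div hr]; exact hyσ.le
      have hz2 : 1 ≤ z ^ (a + δ) := Real.one_le_rpow hz1 (by positivity)
      rw [hnz, Real.inv_rpow hz0.le, Real.rpow_neg hz0.le, inv_inv]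
      calc μ y ^ α ≤ (2 * D * Φ * z ^ (a + δ)) ^ α := by
            apply Real.rpow_le_rpow h0 _ hα0.le
            refine h2.trans ?_
            have : D * Φ * (1 + z ^ (a + δ)) ≤ D * Φ * (2 * z ^ (a + δ)) := by
              gcongr; linarith
            linarith
        _ = (2 * D * Φ) ^ α * z ^ (α * (a + δ)) := by
            rw [Real.mul_rpow (by positivity) (by positivity), ← Real.rpow_mul hz0.le,
              mul_comm α]
        _ ≤ _ := by gcongr; linarith
    · have hz1 : z ≤ 1 := by rw [hz, div_le_one hr]; exact not_lt.1 hyσ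
      have hz2 : z ^ (a + δ) ≤ 1 := Real.rpow_le_one hz0.le hz1 (by positivity)
      calc μ y ^ α ≤ (2 * D * Φ) ^ α := by
            apply Real.rpow_le_rpow h0 _ hα0.le
            refine h2.trans ?_
            have : D * Φ * (1 + z ^ (a + δ)) ≤ D * Φ * 2 := by
              gcongr; linarith
            linarith
        _ ≤ _ := by
            apply le_mul_of_one_le_right (by positivity)
            have : 0 ≤ (Metric.ball (0 : EuclideanSpace ℝ (Fin N)) 1).indicator
              (fun z => ‖z‖ ^ (-(α * (a + δ)))) (σ⁻¹ • y) :=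
              Set.indicator_nonneg (fun _ _ => by positivity) _
            linarith
  have hne : ∀ᵐ y : EuclideanSpace ℝ (Fin N), y ≠ 0 := by
    simp [ae_iff]
  have hfin := hA σ hσ x (fun y => μ y ^ α) ((2 * D * Φ) ^ α) (by positivity)
    (by filter_upwards [hbound] with y hy using Real.rpow_nonneg hy.1 _)
    (by filter_upwards [hbound, hne] with y hy hy0 using hpt y hy0 hy.1 hy.2)
  have hnn : 0 ≤ ⨍ y in Metric.ball x σ, μ y ^ α := by
    rw [setAverage_eq]
    refine smul_nonneg (by positivity) (integral_nonneg_of_ae (ae_restrict_of_ae ?_))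
    filter_upwards [hbound] with y hy using Real.rpow_nonneg hy.1 _
  rw [hσa, hlogσ]
  calc (⨍ y in Metric.ball x σ, μ y ^ α) ^ (1/α) ≤ ((2 * D * Φ) ^ α * A) ^ (1/α) :=
        Real.rpow_le_rpow hnn hfin (by positivity)
    _ = 2 * D * Φ * A ^ (1/α) := by
        rw [Real.mul_rpow (by positivity) hA0.le, ← Real.rpow_mul (by positivity),
          mul_one_div_cancel hα0.ne', Real.rpow_one]
    _ = _ := by
        rw [hΦ]; field_simp
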